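/- Let G be a connected finite simple graph on n ≥ 2 vertices containing at least one edge, and let Δ be its maximum vertex degree. Then the Q-index of G satisfies q(G) ≥ Δ + 1, with equality if and only if G is isomorphic to the star K_{1,n−1}. -/

import Mathlib

open Matrix

/-- The signless Laplacian `Q(G) = D(G) + A(G)` of a finite simple graph `G`. -/
noncomputable def signlessLaplacian {V : Type*} [Fintype V] (G : SimpleGraph V) :
    Matrix V V ℝ :=
  letI := Classical.decEq V
  letI : DecidableRel G.Adj := Classical.decRel _
  Matrix.diagonal (fun v => (G.degree v : ℝ)) + G.adjMatrix ℝ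

/-- The `Q`-index of `G`: the largest eigenvalue of the signless Laplacian `Q(G)`. -/
noncomputable def qIndex {V : Type*} [Fintype V] (G : SimpleGraph V) : ℝ :=
  letI := Classical.decEq V
  sSup (spectrum ℝ (signlessLaplacian G))

/-- The matrix `q - M` is positive semidefinite, for `q` the top of the spectrum. -/
theorem aux_psd {V : Type*} [Fintype V] [DecidableEq V] (M : Matrix V V ℝ)
    (hM : M.IsHermitian) :
    (algebraMap ℝ (Matrix V V ℝ) (sSup (spectrum ℝ M)) - M).PosSemidef := by
  have hfin : (spectrum ℝ M).Finite := Matrix.finite_real_spectrum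
  have hH : (algebraMap ℝ (Matrix V V ℝ) (sSup (spectrum ℝ M)) - M).IsHermitian := by
    apply Matrix.IsHermitian.sub _ hM
    rw [Matrix.algebraMap_eq_diagonal]
    exact Matrix.isHermitian_diagonal _
  rw [hH.posSemidef_iff_eigenvalues_nonneg]
  intro i
  have h1 := hH.eigenvalues_mem_spectrum_real i
  rw [← spectrum.singleton_sub_eq] at h1
  obtain ⟨a, ha, b, hb, hab⟩ := h1
  have : b ≤ sSup (spectrum ℝ M) := le_csSup hfin.bddAbove hb
  simp only [Set.mem_singleton_iff] at ha
  subst ha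
  simp only [Pi.zero_apply]
  rw [← hab]
  simp only
  linarith

theorem aux_herm {V : Type*} [Fintype V] (G : SimpleGraph V) :
    (signlessLaplacian G).IsHermitian := by
  classical
  unfold signlessLaplacian
  apply Matrix.IsHermitian.add
  · exact Matrix.isHermitian_diagonal _
  · rw [Matrix.IsHermitian, Matrix.conjTranspose_eq_transpose_of_trivial]
    exact SimpleGraph.transpose_adjMatrix _

theorem aux_mulVec {V : Type*} [Fintype V] (G : SimpleGraph V) [DecidableRel G.Adj]
    (x : V → ℝ) (v : V) :
    (signlessLaplacian G *ᵥ x) v = ∑ w, if G.Adj v w then x v + x w else 0 := by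
  classical
  unfold signlessLaplacian
  rw [Matrix.add_mulVec, Pi.add_apply, Matrix.mulVec_diagonal, SimpleGraph.adjMatrix_mulVec_apply]
  have : ∀ w, (if G.Adj v w then x v + x w else 0)
      = (if G.Adj v w then x v else 0) + (if G.Adj v w then x w else 0) := by
    intro w; split_ifs <;> simp
  simp only [this, Finset.sum_add_distrib]
  rw [← Finset.sum_filter, ← Finset.sum_filter, Finset.sum_const, nsmul_eq_mul,
    ← SimpleGraph.card_neighborFinset_eq_degree]
  congr! 3
  · congr 1; ext w; simp
  · ext w; simp

/-- Rayleigh bound, with its equality case. -/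
theorem aux_rayleigh {V : Type*} [Fintype V] (G : SimpleGraph V) (x : V → ℝ) :
    x ⬝ᵥ (signlessLaplacian G *ᵥ x) ≤ qIndex G * (x ⬝ᵥ x) ∧
    (x ⬝ᵥ (signlessLaplacian G *ᵥ x) = qIndex G * (x ⬝ᵥ x) →
      signlessLaplacian G *ᵥ x = qIndex G • x) := by
  letI := Classical.decEq V
  have h := aux_psd (signlessLaplacian G) (aux_herm G)
  change (algebraMap ℝ (Matrix V V ℝ) (qIndex G) - signlessLaplacian G).PosSemidef at h
  have e : (algebraMap ℝ (Matrix V V ℝ) (qIndex G) - signlessLaplacian G) *ᵥ x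
      = qIndex G • x - signlessLaplacian G *ᵥ x := by
    rw [Matrix.sub_mulVec, Algebra.algebraMap_eq_smul_one, Matrix.smul_mulVec, Matrix.one_mulVec]
  have h1 := h.dotProduct_mulVec_nonneg x
  have h2 := h.dotProduct_mulVec_zero_iff x
  rw [e] at h1 h2
  simp only [star_trivial, dotProduct_sub, dotProduct_smul, smul_eq_mul] at h1 h2
  refine ⟨by linarith, fun h3 => ?_⟩
  have := h2.1 (by linarith)
  exact (sub_eq_zero.1 this).symm

/-- The `Q`-index is attained. -/
theorem aux_eig {V : Type*} [Fintype V] [Nonempty V] (G : SimpleGraph V) :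
    ∃ x : V → ℝ, x ≠ 0 ∧ signlessLaplacian G *ᵥ x = qIndex G • x := by
  letI := Classical.decEq V
  have hfin : (spectrum ℝ (signlessLaplacian G)).Finite := Matrix.finite_real_spectrum
  have hne : (spectrum ℝ (signlessLaplacian G)).Nonempty :=
    ⟨_, (aux_herm G).eigenvalues_mem_spectrum_real (Classical.arbitrary V)⟩
  have h : qIndex G ∈ spectrum ℝ (signlessLaplacian G) := hne.csSup_mem hfin
  rw [← Matrix.spectrum_toLin', ← Module.End.hasEigenvalue_iff_mem_spectrum] at h
  obtain ⟨x, hx⟩ := h.exists_hasEigenvector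
  exact ⟨x, hx.2, by simpa using hx.apply_eq_smul⟩

/-- For a star the `Q`-index is at most `n`. -/
theorem aux_star {V : Type*} [Fintype V] [Nonempty V] (G : SimpleGraph V) (c : V)
    (hc : ∀ a b, G.Adj a b ↔ (a = c ∧ b ≠ c) ∨ (a ≠ c ∧ b = c)) :
    qIndex G ≤ Fintype.card V := by
  classical
  obtain ⟨x, hx, hq⟩ := aux_eig G
  set q := qIndex G
  have h1 : ∀ v, v ≠ c → x v + x c = q * x v := by
    intro v hv
    have := congrFun hq v
    rw [aux_mulVec] at this
    simpa [hc, hv] using this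
  have hcc := congrFun hq c
  rw [aux_mulVec] at hcc
  have hN : (1 : ℝ) ≤ Fintype.card V := by exact_mod_cast Fintype.card_pos
  have e0 : ∀ w, (if G.Adj c w then x c + x w else 0)
      = (if w = c then -(2 * x c) else 0) + (x c + x w) := by
    intro w
    by_cases hw : w = c
    · subst hw; simp; ring
    · simp [hc, hw]
  simp only [e0, Finset.sum_add_distrib] at hcc
  simp only [Finset.sum_ite_eq', Finset.mem_univ, if_true, Finset.sum_const, Finset.card_univ,
    nsmul_eq_mul, Pi.smul_apply, smul_eq_mul] at hcc
  have h2 : ∑ v, (x v + x c - q * x v) = 2 * x c - q * x c := by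
    rw [Finset.sum_eq_single c]
    · ring
    · intro b _ hb; rw [h1 b hb]; ring
    · simp
  simp only [Finset.sum_sub_distrib, Finset.sum_add_distrib, ← Finset.mul_sum, Finset.sum_const,
    Finset.card_univ, nsmul_eq_mul] at h2
  by_cases hxc : x c = 0
  · obtain ⟨v, hv⟩ := Function.ne_iff.1 hx
    have hvc : v ≠ c := by rintro rfl; exact hv hxc
    have := h1 v hvc
    rw [hxc, add_zero] at this
    have : q = 1 := by
      have h3 : (q - 1) * x v = 0 := by linarith
      rcases mul_eq_zero.1 h3 with h | h
      · linarith
      · exact absurd h hv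
    linarith
  · set N : ℝ := (Fintype.card V : ℝ)
    have hS : ∑ v, x v = (q - N + 2) * x c := by linarith
    rw [hS] at h2
    have : (q * (q - N)) * x c = 0 := by linear_combination -h2
    rcases mul_eq_zero.1 this with h | h
    · rcases mul_eq_zero.1 h with h | h <;> linarith
    · exact absurd h hxc

theorem aux_main {V : Type*} [Fintype V] (G : SimpleGraph V) [DecidableRel G.Adj] (u : V)
    (hu : 0 < G.degree u) :
    ((G.degree u : ℕ) : ℝ) + 1 ≤ qIndex G ∧
    (qIndex G = (G.degree u : ℝ) + 1 → ∀ w, G.Adj u w → ∀ z, G.Adj w z → z = u) := by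
  classical
  set d : ℝ := (G.degree u : ℝ) with hd
  have hdpos : 0 < d := by simp only [hd]; exact_mod_cast hu
  let x : V → ℝ := fun v => if v = u then d else if G.Adj u v then 1 else 0
  have hxu : x u = d := by simp [x]
  have hxw : ∀ w, G.Adj u w → x w = 1 := by
    intro w hw
    simp [x, hw, hw.ne']
  have hx0 : ∀ w, 0 ≤ x w := by
    intro w; simp only [x]; split_ifs <;> linarith
  have hterm : ∀ v w, 0 ≤ (if G.Adj v w then x v + x w else 0) := by
    intro v w
    split_ifs
    · exact add_nonneg (hx0 v) (hx0 w)
    · exact le_rfl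
  have hge : ∀ v, (d + 1) * x v ≤ (signlessLaplacian G *ᵥ x) v := by
    intro v
    rw [aux_mulVec]
    by_cases hvu : v = u
    · subst hvu
      rw [← Finset.sum_filter]
      rw [Finset.sum_congr rfl (g := fun _ => d + 1)]
      · rw [Finset.sum_const, nsmul_eq_mul, ← SimpleGraph.neighborFinset_eq_filter,
          SimpleGraph.card_neighborFinset_eq_degree, hxu]
        linarith
      · intro w hw
        rw [hxu, hxw w (by simpa using hw)]
    · by_cases hv : G.Adj u v
      · have := Finset.single_le_sum (f := fun w => if G.Adj v w then x v + x w else 0)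
          (fun w _ => hterm v w) (Finset.mem_univ u)
        simp only [hv.symm, if_true, hxu, hxw v hv] at this
        rw [hxw v hv]
        linarith
      · have : x v = 0 := by simp [x, hvu, hv]
        rw [this, mul_zero]
        exact Finset.sum_nonneg fun w _ => by simpa [this] using hterm v w
  have hsum : (d + 1) * (x ⬝ᵥ x) ≤ x ⬝ᵥ (signlessLaplacian G *ᵥ x) := by
    simp only [dotProduct, Finset.mul_sum]
    apply Finset.sum_le_sum
    intro v _
    nlinarith [mul_le_mul_of_nonneg_left (hge v) (hx0 v)]
  have hpos : 0 < x ⬝ᵥ x := by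
    have := Finset.single_le_sum (f := fun w => x w * x w)
          (fun w _ => mul_self_nonneg _) (Finset.mem_univ u)
    simp only [hxu] at this
    exact lt_of_lt_of_le (mul_pos hdpos hdpos) this
  obtain ⟨hr, hr'⟩ := aux_rayleigh G x
  refine ⟨le_of_mul_le_mul_right (hsum.trans hr) hpos, fun hq w hw z hz => ?_⟩
  have heig := congrFun (hr' (le_antisymm hr (by rw [hq]; exact hsum))) w
  rw [aux_mulVec, Pi.smul_apply, hxw w hw, hq, smul_eq_mul, mul_one] at heig
  by_contra hzu
  have h2 : ∑ y ∈ ({u, z} : Finset V), (if G.Adj w y then 1 + x y else 0) ≤ d + 1 := by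
    rw [← heig]
    apply Finset.sum_le_sum_of_subset_of_nonneg (Finset.subset_univ _)
    intro y _ _
    simpa [hxw w hw] using hterm w y
  rw [Finset.sum_pair (Ne.symm hzu)] at h2
  simp only [hw.symm, hz, if_true, hxu] at h2
  linarith [hx0 z]

/-- for a connected graph `G` on `n ≥ 2` vertices with at least one edge
and maximum degree `Δ`, one has `q(G) ≥ Δ + 1`, with equality iff `G ≅ K_{1,n-1}`. -/
theorem stmt_19 (n : ℕ) (hn : 2 ≤ n) (G : SimpleGraph (Fin n)) [DecidableRel G.Adj]
    (hconn : G.Connected) (hedge : G.edgeSet.Nonempty) :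
    ((Finset.univ.sup (fun v => G.degree v) : ℕ) : ℝ) + 1 ≤ qIndex G ∧
      (qIndex G = ((Finset.univ.sup (fun v => G.degree v) : ℕ) : ℝ) + 1 ↔
        Nonempty (G ≃g completeBipartiteGraph (Fin 1) (Fin (n - 1)))) := by
  haveI : Nonempty (Fin n) := ⟨⟨0, by omega⟩⟩
  obtain ⟨u, -, hu⟩ := Finset.exists_mem_eq_sup (Finset.univ : Finset (Fin n))
    Finset.univ_nonempty (fun v => G.degree v)
  have hmax : ∀ v, G.degree v ≤ G.degree u := fun v => by
    rw [← hu]; exact Finset.le_sup (f := fun v => G.degree v) (Finset.mem_univ v)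
  rw [hu]
  have hpos : 0 < G.degree u := by
    obtain ⟨e, he⟩ := hedge
    induction e using Sym2.ind with
    | _ a b =>
      have hab : G.Adj a b := he
      exact lt_of_lt_of_le ((G.degree_pos_iff_exists_adj a).2 ⟨b, hab⟩) (hmax a)
  obtain ⟨h1, h2⟩ := aux_main G u hpos
  refine ⟨h1, fun hq => ?_, ?_⟩
  · have h3 := h2 hq
    have hall : ∀ v, v = u ∨ G.Adj u v := by
      intro v
      have hr : Relation.ReflTransGen G.Adj u v :=
        (SimpleGraph.reachable_iff_reflTransGen u v).1 (hconn.preconnected u v)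
      induction hr with
      | refl => exact Or.inl rfl
      | tail _ hbc ih =>
        rcases ih with rfl | ih
        · exact Or.inr hbc
        · exact Or.inl (h3 _ ih _ hbc)
    have hadj : ∀ a b, G.Adj a b ↔ (a = u ∧ b ≠ u) ∨ (a ≠ u ∧ b = u) := by
      intro a b
      constructor
      · intro hab
        by_cases ha : a = u
        · subst ha; exact Or.inl ⟨rfl, hab.ne'⟩
        · exact Or.inr ⟨ha, h3 a ((hall a).resolve_left ha) b hab⟩
      · rintro (⟨rfl, hb⟩ | ⟨ha, rfl⟩)
        · exact (hall b).resolve_left hb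
        · exact ((hall a).resolve_left ha).symm
    have e1 : {v : Fin n // v = u} ≃ Fin 1 := Equiv.ofUnique _ _
    have e2 : {v : Fin n // ¬ v = u} ≃ Fin (n - 1) :=
      Fintype.equivFinOfCardEq (by
        rw [Fintype.card_subtype_compl]; simp)
    let e : Fin n ≃ Fin 1 ⊕ Fin (n - 1) :=
      (Equiv.sumCompl (fun v => v = u)).symm.trans (Equiv.sumCongr e1 e2)
    have hl : ∀ v, v = u → (e v).isLeft = true ∧ (e v).isRight = false := by
      intro v hv
      have := Equiv.sumCompl_symm_apply_of_pos (p := fun v => v = u) hv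
      simp [e, this]
    have hr : ∀ v, v ≠ u → (e v).isLeft = false ∧ (e v).isRight = true := by
      intro v hv
      have := Equiv.sumCompl_symm_apply_of_neg (p := fun v => v = u) hv
      simp [e, this]
    refine ⟨⟨e, ?_⟩⟩
    intro a b
    rw [completeBipartiteGraph_adj, hadj]
    by_cases ha : a = u <;> by_cases hb : b = u <;> simp [hl, hr, ha, hb]
  · rintro ⟨φ⟩
    apply le_antisymm _ h1
    set c := φ.symm (Sum.inl 0) with hcdef
    have hφc : φ c = Sum.inl 0 := by simp [hcdef]
    have hL : ∀ v, (φ v).isLeft = true ↔ v = c := by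
      intro v
      constructor
      · intro h
        obtain ⟨y, hy⟩ := Sum.isLeft_iff.1 h
        apply φ.injective
        rw [hy, hφc, Subsingleton.elim y 0]
      · rintro rfl; rw [hφc]; rfl
    have hR : ∀ v, (φ v).isRight = true ↔ v ≠ c := by
      intro v
      rw [← not_iff_not, not_not, ← hL v]
      cases φ v <;> simp
    have hc : ∀ a b, G.Adj a b ↔ (a = c ∧ b ≠ c) ∨ (a ≠ c ∧ b = c) := by
      intro a b
      rw [← φ.map_adj_iff, completeBipartiteGraph_adj]
      simp only [hL, hR]
    have hdeg : G.degree c = n - 1 := by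
      rw [← SimpleGraph.card_neighborFinset_eq_degree]
      have : G.neighborFinset c = Finset.univ.erase c := by
        ext w; simp [hc]
      rw [this, Finset.card_erase_of_mem (Finset.mem_univ c)]; simp
    have h5 := aux_star G c hc
    have h6 : n ≤ G.degree u + 1 := by have := hmax c; omega
    have h7 : (n : ℝ) ≤ (G.degree u : ℝ) + 1 := by exact_mod_cast h6
    rw [Fintype.card_fin] at h5
    exact h5.trans h7
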